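/- arXiv:2002.00689 — 7 statements merged into one kernel-verified Lean document; each statement's English description precedes it below -/
import Mathlib

section
/- Let Δ = (E,H) and Δ̃ = (Ẽ,H̃) be linear DAEs with matrices in ℝ^{l×n} such that rank E = rank Ẽ = q. Let Λ = (A,B,C,D) be a (Q,P)-explicitation of Δ and Λ̃ = (Ã,B̃,C̃,D̃) be a (Q̃,P̃)-explicitation of Δ̃. Then Δ and Δ̃ are ex-equivalent if and only if Λ and Λ̃ are Morse equivalent. -/
noncomputable section

open Matrix

/-- Two DAEs `(E,H)` and `(E',H')` (same sizes) are externally equivalent: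
there exist invertible `Q, P` with `E' = Q E P⁻¹` and `H' = Q H P⁻¹`. -/
def ExEquiv {L N : Type*} [Fintype L] [Fintype N] [DecidableEq L] [DecidableEq N]
    (E H E' H' : Matrix L N ℝ) : Prop :=
  ∃ (Q : Matrix L L ℝ) (P : Matrix N N ℝ), IsUnit Q.det ∧ IsUnit P.det ∧
    E' = Q * E * P⁻¹ ∧ H' = Q * H * P⁻¹

/-- Morse equivalence of two control systems `(A,B,C,D)` and `(A',B',C',D')`. -/
def MorseEquiv {q m p : ℕ}
    (A A' : Matrix (Fin q) (Fin q) ℝ) (B B' : Matrix (Fin q) (Fin m) ℝ)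
    (C C' : Matrix (Fin p) (Fin q) ℝ) (D D' : Matrix (Fin p) (Fin m) ℝ) : Prop :=
  ∃ (Ts : Matrix (Fin q) (Fin q) ℝ) (Ti : Matrix (Fin m) (Fin m) ℝ)
    (To : Matrix (Fin p) (Fin p) ℝ) (F : Matrix (Fin m) (Fin q) ℝ)
    (K : Matrix (Fin q) (Fin p) ℝ),
    IsUnit Ts.det ∧ IsUnit Ti.det ∧ IsUnit To.det ∧
    Matrix.fromBlocks A' B' C' D' =
      Matrix.fromBlocks Ts (Ts * K) 0 To * Matrix.fromBlocks A B C D *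
        Matrix.fromBlocks Ts⁻¹ 0 (F * Ts⁻¹) Ti⁻¹

/-- `Λ = (A,B,C,D)` is the `(Q,P)`-explicitation of the DAE `Δ = (E,H)`. -/
def IsQPExplicitation {q m p : ℕ} (E H : Matrix (Fin q ⊕ Fin p) (Fin q ⊕ Fin m) ℝ)
    (Q : Matrix (Fin q ⊕ Fin p) (Fin q ⊕ Fin p) ℝ)
    (P : Matrix (Fin q ⊕ Fin m) (Fin q ⊕ Fin m) ℝ)
    (A : Matrix (Fin q) (Fin q) ℝ) (B : Matrix (Fin q) (Fin m) ℝ)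
    (C : Matrix (Fin p) (Fin q) ℝ) (D : Matrix (Fin p) (Fin m) ℝ) : Prop :=
  Q * E * P⁻¹ = Matrix.fromBlocks 1 0 0 0 ∧ Q * H * P⁻¹ = Matrix.fromBlocks A B C D

/-!
An explicitation of `(E, H)` is a DAE `(J, M)` with `J = diag(I, 0)` that is externally equivalent
to `(E, H)`. Hence `(E, H)` and `(E', H')` are externally equivalent iff some invertible `U`, `W`
carry `M` to `M' = U M W` and satisfy `U J W = J`. In blocks the latter equation says
`U₁ W₁ = I`, `U₃ = 0` and `W₂ = 0`: the stabilizer of `J` consists exactly of the Morse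
transformations.
-/

section ExternalEquivalence

variable {L N : Type*} [Fintype L] [Fintype N] [DecidableEq L] [DecidableEq N]
  {E H E' H' E'' H'' : Matrix L N ℝ}

theorem exEquiv_iff_exists_mul_mul :
    ExEquiv E H E' H' ↔ ∃ (U : Matrix L L ℝ) (W : Matrix N N ℝ),
      IsUnit U.det ∧ IsUnit W.det ∧ E' = U * E * W ∧ H' = U * H * W := by
  constructor
  · rintro ⟨Q, P, hQ, hP, hE, hH⟩
    exact ⟨Q, P⁻¹, hQ, isUnit_nonsing_inv_det P hP, hE, hH⟩
  · rintro ⟨U, W, hU, hW, hE, hH⟩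
    refine ⟨U, W⁻¹, hU, isUnit_nonsing_inv_det W hW, ?_, ?_⟩ <;>
      rwa [nonsing_inv_nonsing_inv W hW]

theorem ExEquiv.symm (h : ExEquiv E H E' H') : ExEquiv E' H' E H := by
  obtain ⟨Q, P, hQ, hP, rfl, rfl⟩ := h
  have cancel (M : Matrix L N ℝ) : M = Q⁻¹ * (Q * M * P⁻¹) * P := by
    rw [Matrix.mul_assoc Q, nonsing_inv_mul_cancel_left Q _ hQ,
      nonsing_inv_mul_cancel_right P _ hP]
  exact exEquiv_iff_exists_mul_mul.2
    ⟨Q⁻¹, P, isUnit_nonsing_inv_det Q hQ, hP, cancel E, cancel H⟩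

theorem ExEquiv.trans (h : ExEquiv E H E' H') (h' : ExEquiv E' H' E'' H'') :
    ExEquiv E H E'' H'' := by
  obtain ⟨Q, P, hQ, hP, rfl, rfl⟩ := h
  obtain ⟨Q', P', hQ', hP', rfl, rfl⟩ := h'
  refine ⟨Q' * Q, P' * P, ?_, ?_, ?_, ?_⟩
  · exact det_mul Q' Q ▸ hQ'.mul hQ
  · exact det_mul P' P ▸ hP'.mul hP
  all_goals simp only [Matrix.mul_inv_rev, Matrix.mul_assoc]

theorem exEquiv_congr {E₁ H₁ E₂ H₂ E₁' H₁' E₂' H₂' : Matrix L N ℝ}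
    (h : ExEquiv E₁ H₁ E₂ H₂) (h' : ExEquiv E₁' H₁' E₂' H₂') :
    ExEquiv E₁ H₁ E₁' H₁' ↔ ExEquiv E₂ H₂ E₂' H₂' :=
  ⟨fun g => (h.symm.trans g).trans h', fun g => (h.trans g).trans h'.symm⟩

end ExternalEquivalence

section MorseTransformation

/-- The block matrix `diag(I_q, 0)`, normal form of a matrix of rank `q`; it is the matrix `E` of
every DAE in semi-explicit form `ẋ = A x + B u`, `0 = C x + D u`. -/
abbrev rankNormalForm (q m p R : Type*) [DecidableEq q] [Zero R] [One R] :
    Matrix (q ⊕ p) (q ⊕ m) R :=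
  fromBlocks 1 0 0 0

variable {q m p R : Type*} [Fintype q] [Fintype m] [Fintype p] [DecidableEq q] [CommRing R]

theorem fromBlocks_mul_rankNormalForm_mul_fromBlocks_eq_iff
    {U₁ W₁ : Matrix q q R} {U₂ : Matrix q p R} {U₃ : Matrix p q R} {U₄ : Matrix p p R}
    {W₂ : Matrix q m R} {W₃ : Matrix m q R} {W₄ : Matrix m m R} :
    fromBlocks U₁ U₂ U₃ U₄ * rankNormalForm q m p R * fromBlocks W₁ W₂ W₃ W₄ =
        rankNormalForm q m p R ↔
      U₁ * W₁ = 1 ∧ U₃ = 0 ∧ W₂ = 0 := by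
  simp only [fromBlocks_multiply, Matrix.mul_one, Matrix.mul_zero, Matrix.zero_mul, add_zero,
    fromBlocks_inj]
  constructor
  · rintro ⟨h₁, h₂, h₃, -⟩
    have h₁' : W₁ * U₁ = 1 := mul_eq_one_comm.1 h₁
    refine ⟨h₁, ?_, ?_⟩
    · calc
        U₃ = U₃ * W₁ * U₁ := by rw [Matrix.mul_assoc, h₁', Matrix.mul_one]
        _ = 0 := by rw [h₃, Matrix.zero_mul]
    · calc
        W₂ = W₁ * (U₁ * W₂) := by rw [← Matrix.mul_assoc, h₁', Matrix.one_mul]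
        _ = 0 := by rw [h₂, Matrix.mul_zero]
  · rintro ⟨h₁, rfl, rfl⟩
    exact ⟨h₁, Matrix.mul_zero _, Matrix.zero_mul _, Matrix.zero_mul _⟩

variable [DecidableEq m] [DecidableEq p]

/-- `U` and `W` are the left and right factors of a Morse transformation
`(T_s, T_i, T_o, F, K)`, which acts on system matrices by `M ↦ U * M * W`. -/
def IsMorseTransformation (U : Matrix (q ⊕ p) (q ⊕ p) R) (W : Matrix (q ⊕ m) (q ⊕ m) R) : Prop :=
  ∃ (Ts : Matrix q q R) (Ti : Matrix m m R) (To : Matrix p p R) (F : Matrix m q R)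
    (K : Matrix q p R), IsUnit Ts.det ∧ IsUnit Ti.det ∧ IsUnit To.det ∧
      U = fromBlocks Ts (Ts * K) 0 To ∧ W = fromBlocks Ts⁻¹ 0 (F * Ts⁻¹) Ti⁻¹

namespace IsMorseTransformation

variable {U : Matrix (q ⊕ p) (q ⊕ p) R} {W : Matrix (q ⊕ m) (q ⊕ m) R}

theorem isUnit_det_left (h : IsMorseTransformation U W) : IsUnit U.det := by
  obtain ⟨Ts, Ti, To, F, K, hs, -, ho, rfl, -⟩ := h
  rw [det_fromBlocks_zero₂₁]
  exact hs.mul ho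

theorem isUnit_det_right (h : IsMorseTransformation U W) : IsUnit W.det := by
  obtain ⟨Ts, Ti, To, F, K, hs, hi, -, -, rfl⟩ := h
  rw [det_fromBlocks_zero₁₂]
  exact (isUnit_nonsing_inv_det Ts hs).mul (isUnit_nonsing_inv_det Ti hi)

theorem mul_rankNormalForm_mul (h : IsMorseTransformation U W) :
    U * rankNormalForm q m p R * W = rankNormalForm q m p R := by
  obtain ⟨Ts, Ti, To, F, K, hs, -, -, rfl, rfl⟩ := h
  exact fromBlocks_mul_rankNormalForm_mul_fromBlocks_eq_iff.2
    ⟨mul_nonsing_inv Ts hs, rfl, rfl⟩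

theorem of_mul_rankNormalForm_mul (hU : IsUnit U.det) (hW : IsUnit W.det)
    (h : U * rankNormalForm q m p R * W = rankNormalForm q m p R) : IsMorseTransformation U W := by
  obtain ⟨U₁, U₂, U₃, U₄, rfl⟩ : ∃ U₁ U₂ U₃ U₄, U = fromBlocks U₁ U₂ U₃ U₄ :=
    ⟨_, _, _, _, (fromBlocks_toBlocks U).symm⟩
  obtain ⟨W₁, W₂, W₃, W₄, rfl⟩ : ∃ W₁ W₂ W₃ W₄, W = fromBlocks W₁ W₂ W₃ W₄ :=
    ⟨_, _, _, _, (fromBlocks_toBlocks W).symm⟩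
  obtain ⟨h₁, rfl, rfl⟩ := fromBlocks_mul_rankNormalForm_mul_fromBlocks_eq_iff.1 h
  obtain rfl : U₁⁻¹ = W₁ := inv_eq_right_inv h₁
  rw [det_fromBlocks_zero₂₁, IsUnit.mul_iff] at hU
  rw [det_fromBlocks_zero₁₂, IsUnit.mul_iff] at hW
  refine ⟨U₁, W₄⁻¹, U₄, W₃ * U₁, U₁⁻¹ * U₂, hU.1, isUnit_nonsing_inv_det W₄ hW.2, hU.2, ?_, ?_⟩
  · rw [mul_nonsing_inv_cancel_left U₁ _ hU.1]
  · rw [mul_nonsing_inv_cancel_right U₁ _ hU.1, nonsing_inv_nonsing_inv W₄ hW.2]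

end IsMorseTransformation

theorem isMorseTransformation_iff
    {U : Matrix (q ⊕ p) (q ⊕ p) R} {W : Matrix (q ⊕ m) (q ⊕ m) R} :
    IsMorseTransformation U W ↔
      IsUnit U.det ∧ IsUnit W.det ∧ U * rankNormalForm q m p R * W = rankNormalForm q m p R :=
  ⟨fun h => ⟨h.isUnit_det_left, h.isUnit_det_right, h.mul_rankNormalForm_mul⟩,
    fun ⟨hU, hW, h⟩ => .of_mul_rankNormalForm_mul hU hW h⟩

end MorseTransformation

section Explicitation

variable {q m p : ℕ} {E H : Matrix (Fin q ⊕ Fin p) (Fin q ⊕ Fin m) ℝ}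
  {Q : Matrix (Fin q ⊕ Fin p) (Fin q ⊕ Fin p) ℝ} {P : Matrix (Fin q ⊕ Fin m) (Fin q ⊕ Fin m) ℝ}
  {A A' : Matrix (Fin q) (Fin q) ℝ} {B B' : Matrix (Fin q) (Fin m) ℝ}
  {C C' : Matrix (Fin p) (Fin q) ℝ} {D D' : Matrix (Fin p) (Fin m) ℝ}

theorem IsQPExplicitation.exEquiv (h : IsQPExplicitation E H Q P A B C D)
    (hQ : IsUnit Q.det) (hP : IsUnit P.det) :
    ExEquiv E H (rankNormalForm (Fin q) (Fin m) (Fin p) ℝ) (fromBlocks A B C D) :=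
  ⟨Q, P, hQ, hP, h.1.symm, h.2.symm⟩

theorem morseEquiv_iff_exists_isMorseTransformation :
    MorseEquiv A A' B B' C C' D D' ↔
      ∃ (U : Matrix (Fin q ⊕ Fin p) (Fin q ⊕ Fin p) ℝ)
        (W : Matrix (Fin q ⊕ Fin m) (Fin q ⊕ Fin m) ℝ), IsMorseTransformation U W ∧
        fromBlocks A' B' C' D' = U * fromBlocks A B C D * W := by
  constructor
  · rintro ⟨Ts, Ti, To, F, K, hs, hi, ho, hM⟩
    exact ⟨_, _, ⟨Ts, Ti, To, F, K, hs, hi, ho, rfl, rfl⟩, hM⟩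
  · rintro ⟨_, _, ⟨Ts, Ti, To, F, K, hs, hi, ho, rfl, rfl⟩, hM⟩
    exact ⟨Ts, Ti, To, F, K, hs, hi, ho, hM⟩

theorem exEquiv_rankNormalForm_iff_morseEquiv :
    ExEquiv (rankNormalForm (Fin q) (Fin m) (Fin p) ℝ) (fromBlocks A B C D)
        (rankNormalForm (Fin q) (Fin m) (Fin p) ℝ) (fromBlocks A' B' C' D') ↔
      MorseEquiv A A' B B' C C' D D' := by
  simp only [exEquiv_iff_exists_mul_mul, morseEquiv_iff_exists_isMorseTransformation,
    isMorseTransformation_iff, and_assoc, eq_comm (a := rankNormalForm _ _ _ _)]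

end Explicitation

/-- Two DAEs are ex-equivalent iff their explicitations are
Morse equivalent. -/
theorem stmt1 {q m p : ℕ}
    (E H E' H' : Matrix (Fin q ⊕ Fin p) (Fin q ⊕ Fin m) ℝ)
    (hE : E.rank = q) (hE' : E'.rank = q)
    (Q : Matrix (Fin q ⊕ Fin p) (Fin q ⊕ Fin p) ℝ)
    (P : Matrix (Fin q ⊕ Fin m) (Fin q ⊕ Fin m) ℝ)
    (Q' : Matrix (Fin q ⊕ Fin p) (Fin q ⊕ Fin p) ℝ)
    (P' : Matrix (Fin q ⊕ Fin m) (Fin q ⊕ Fin m) ℝ)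
    (hQ : IsUnit Q.det) (hP : IsUnit P.det) (hQ' : IsUnit Q'.det) (hP' : IsUnit P'.det)
    (A A' : Matrix (Fin q) (Fin q) ℝ) (B B' : Matrix (Fin q) (Fin m) ℝ)
    (C C' : Matrix (Fin p) (Fin q) ℝ) (D D' : Matrix (Fin p) (Fin m) ℝ)
    (hexp : IsQPExplicitation E H Q P A B C D)
    (hexp' : IsQPExplicitation E' H' Q' P' A' B' C' D') :
    ExEquiv E H E' H' ↔ MorseEquiv A A' B B' C C' D D' := by
  rw [exEquiv_congr (hexp.exEquiv hQ hP) (hexp'.exEquiv hQ' hP')]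
  exact exEquiv_rankNormalForm_iff_morseEquiv
end
end

section
/- Let Λ = (A,B,C,D) and Λ̃ = (Ã,B̃,C̃,D̃) be two linear control systems with the same numbers of states q, inputs m and outputs p. Then Λ and Λ̃ are Morse equivalent if and only if their implicitations Impl(Λ) and Impl(Λ̃) are ex-equivalent. -/
noncomputable section

open Matrix

/-- The `E`-matrix of the implicitation `Impl(Λ)`. -/
def implE (q m p : ℕ) : Matrix (Fin q ⊕ Fin p) (Fin q ⊕ Fin m) ℝ :=
  Matrix.fromBlocks 1 0 0 0

/-- The `H`-matrix of the implicitation `Impl(Λ)`. -/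
def implH {q m p : ℕ} (A : Matrix (Fin q) (Fin q) ℝ) (B : Matrix (Fin q) (Fin m) ℝ)
    (C : Matrix (Fin p) (Fin q) ℝ) (D : Matrix (Fin p) (Fin m) ℝ) :
    Matrix (Fin q ⊕ Fin p) (Fin q ⊕ Fin m) ℝ :=
  Matrix.fromBlocks A B C D

/-!
A pair `(Q, S)` fixes the matrix `E = [[1, 0], [0, 0]]` of an implicitation under `E ↦ Q * E * S`
exactly when `Q` is block upper triangular, `S` is block lower triangular, and their upper left
blocks are mutually inverse. The invertible pairs of this kind are precisely those by which Morse
transformations act on `[[A, B], [C, D]]`, so an ex-equivalence between two implicitations is a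
Morse transformation.
-/

section PencilEquiv

variable {R l n : Type*} [CommRing R] [Fintype l] [Fintype n] [DecidableEq l] [DecidableEq n]

/-- Strict equivalence of the matrix pencils `(E, H)` and `(E', H')`, that is, external equivalence
of DAEs with coefficients in a commutative ring. -/
def PencilEquiv (E H E' H' : Matrix l n R) : Prop :=
  ∃ (Q : Matrix l l R) (P : Matrix n n R), IsUnit Q.det ∧ IsUnit P.det ∧
    E' = Q * E * P⁻¹ ∧ H' = Q * H * P⁻¹

lemma pencilEquiv_iff_exists_mul_mul {E H E' H' : Matrix l n R} :
    PencilEquiv E H E' H' ↔ ∃ (Q : Matrix l l R) (S : Matrix n n R),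
      (IsUnit Q ∧ IsUnit S ∧ Q * E * S = E') ∧ H' = Q * H * S := by
  simp only [isUnit_iff_isUnit_det]
  constructor
  · rintro ⟨Q, P, hQ, hP, hE, hH⟩
    exact ⟨Q, P⁻¹, ⟨hQ, isUnit_nonsing_inv_det P hP, hE.symm⟩, hH⟩
  · rintro ⟨Q, S, ⟨hQ, hS, hE⟩, hH⟩
    refine ⟨Q, S⁻¹, hQ, isUnit_nonsing_inv_det S hS, ?_⟩
    rw [nonsing_inv_nonsing_inv S hS]
    exact ⟨hE.symm, hH⟩

end PencilEquiv

section MorseEquiv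

variable {R q m p : Type*} [Fintype q] [Fintype m] [Fintype p] [DecidableEq q]

/-- The `E`-matrix `[[1, 0], [0, 0]]` of the implicitation of a control system with coefficients
in `R`, where `q`, `m`, `p` index the states, inputs and outputs. -/
def implicitationE (R q m p : Type*) [Zero R] [One R] [DecidableEq q] :
    Matrix (q ⊕ p) (q ⊕ m) R :=
  fromBlocks 1 0 0 0

lemma fromBlocks_mul_implicitationE_mul_fromBlocks_eq_iff [Semiring R] [IsStablyFiniteRing R]
    {Q₁ : Matrix q q R} {Q₂ : Matrix q p R} {Q₃ : Matrix p q R} {Q₄ : Matrix p p R}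
    {S₁ : Matrix q q R} {S₂ : Matrix q m R} {S₃ : Matrix m q R} {S₄ : Matrix m m R} :
    fromBlocks Q₁ Q₂ Q₃ Q₄ * implicitationE R q m p * fromBlocks S₁ S₂ S₃ S₄ =
        implicitationE R q m p ↔
      Q₁ * S₁ = 1 ∧ Q₃ = 0 ∧ S₂ = 0 := by
  have blocks : fromBlocks Q₁ Q₂ Q₃ Q₄ * implicitationE R q m p * fromBlocks S₁ S₂ S₃ S₄ =
      fromBlocks (Q₁ * S₁) (Q₁ * S₂) (Q₃ * S₁) (Q₃ * S₂) := by
    simp [implicitationE, fromBlocks_multiply]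
  rw [blocks, implicitationE, fromBlocks_inj]
  constructor
  · rintro ⟨h₁₁, h₁₂, h₂₁, -⟩
    have hSQ : S₁ * Q₁ = 1 := mul_eq_one_comm.mp h₁₁
    refine ⟨h₁₁, ?_, ?_⟩
    · calc Q₃ = Q₃ * S₁ * Q₁ := by rw [Matrix.mul_assoc, hSQ, Matrix.mul_one]
        _ = 0 := by rw [h₂₁, Matrix.zero_mul]
    · calc S₂ = S₁ * (Q₁ * S₂) := by rw [← Matrix.mul_assoc, hSQ, Matrix.one_mul]
        _ = 0 := by rw [h₁₂, Matrix.mul_zero]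
  · rintro ⟨h₁₁, rfl, rfl⟩
    simp only [h₁₁, Matrix.mul_zero, Matrix.zero_mul, and_self]

variable [CommRing R] [DecidableEq m] [DecidableEq p]

/-- The pairs `(Q, S)` by which Morse transformations act, as `M ↦ Q * M * S`, on the matrix
`M = [[A, B], [C, D]]` of a control system: `Ts`, `Ti`, `To` change the state, input and output
coordinates, `F` is a state feedback and `K` an output injection. -/
def IsMorsePair (Q : Matrix (q ⊕ p) (q ⊕ p) R) (S : Matrix (q ⊕ m) (q ⊕ m) R) : Prop :=
  ∃ (Ts : Matrix q q R) (Ti : Matrix m m R) (To : Matrix p p R) (F : Matrix m q R)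
    (K : Matrix q p R), IsUnit Ts.det ∧ IsUnit Ti.det ∧ IsUnit To.det ∧
    Q = fromBlocks Ts (Ts * K) 0 To ∧ S = fromBlocks Ts⁻¹ 0 (F * Ts⁻¹) Ti⁻¹

lemma IsMorsePair.isUnit_and_mul_implicitationE_mul_eq {Q : Matrix (q ⊕ p) (q ⊕ p) R}
    {S : Matrix (q ⊕ m) (q ⊕ m) R} (h : IsMorsePair Q S) :
    IsUnit Q ∧ IsUnit S ∧ Q * implicitationE R q m p * S = implicitationE R q m p := by
  obtain ⟨Ts, Ti, To, F, K, hTs, hTi, hTo, rfl, rfl⟩ := h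
  have hTs_inv : Ts * Ts⁻¹ = 1 := mul_nonsing_inv Ts hTs
  rw [isUnit_fromBlocks_zero₂₁, isUnit_fromBlocks_zero₁₂, isUnit_nonsing_inv_iff,
    isUnit_nonsing_inv_iff, fromBlocks_mul_implicitationE_mul_fromBlocks_eq_iff]
  rw [← isUnit_iff_isUnit_det] at hTs hTi hTo
  exact ⟨⟨hTs, hTo⟩, ⟨hTs, hTi⟩, hTs_inv, rfl, rfl⟩

lemma isMorsePair_of_mul_implicitationE_mul_eq {Q : Matrix (q ⊕ p) (q ⊕ p) R}
    {S : Matrix (q ⊕ m) (q ⊕ m) R} (hQ : IsUnit Q) (hS : IsUnit S)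
    (hE : Q * implicitationE R q m p * S = implicitationE R q m p) : IsMorsePair Q S := by
  rw [← fromBlocks_toBlocks Q] at hQ hE ⊢
  rw [← fromBlocks_toBlocks S] at hS hE ⊢
  generalize Q.toBlocks₁₁ = Q₁, Q.toBlocks₁₂ = Q₂, Q.toBlocks₂₁ = Q₃, Q.toBlocks₂₂ = Q₄ at *
  generalize S.toBlocks₁₁ = S₁, S.toBlocks₁₂ = S₂, S.toBlocks₂₁ = S₃, S.toBlocks₂₂ = S₄ at *
  obtain ⟨hQS, rfl, rfl⟩ := fromBlocks_mul_implicitationE_mul_fromBlocks_eq_iff.mp hE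
  rw [isUnit_fromBlocks_zero₂₁, isUnit_iff_isUnit_det, isUnit_iff_isUnit_det] at hQ
  rw [isUnit_fromBlocks_zero₁₂, isUnit_iff_isUnit_det, isUnit_iff_isUnit_det] at hS
  refine ⟨Q₁, S₄⁻¹, Q₄, S₃ * Q₁, Q₁⁻¹ * Q₂, hQ.1, isUnit_nonsing_inv_det S₄ hS.2, hQ.2, ?_, ?_⟩
  · rw [mul_nonsing_inv_cancel_left _ _ hQ.1]
  · rw [nonsing_inv_nonsing_inv _ hS.2, mul_nonsing_inv_cancel_right _ _ hQ.1,
      inv_eq_right_inv hQS]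

theorem isMorsePair_iff {Q : Matrix (q ⊕ p) (q ⊕ p) R} {S : Matrix (q ⊕ m) (q ⊕ m) R} :
    IsMorsePair Q S ↔
      IsUnit Q ∧ IsUnit S ∧ Q * implicitationE R q m p * S = implicitationE R q m p :=
  ⟨IsMorsePair.isUnit_and_mul_implicitationE_mul_eq,
    fun ⟨hQ, hS, hE⟩ ↦ isMorsePair_of_mul_implicitationE_mul_eq hQ hS hE⟩

/-- Morse equivalence of control systems with coefficients in a commutative ring, a system
`(A, B, C, D)` being encoded as the block matrix `[[A, B], [C, D]]`. -/
def BlockMorseEquiv (M M' : Matrix (q ⊕ p) (q ⊕ m) R) : Prop :=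
  ∃ (Ts : Matrix q q R) (Ti : Matrix m m R) (To : Matrix p p R) (F : Matrix m q R)
    (K : Matrix q p R), IsUnit Ts.det ∧ IsUnit Ti.det ∧ IsUnit To.det ∧
    M' = fromBlocks Ts (Ts * K) 0 To * M * fromBlocks Ts⁻¹ 0 (F * Ts⁻¹) Ti⁻¹

lemma blockMorseEquiv_iff_exists_isMorsePair {M M' : Matrix (q ⊕ p) (q ⊕ m) R} :
    BlockMorseEquiv M M' ↔ ∃ (Q : Matrix (q ⊕ p) (q ⊕ p) R) (S : Matrix (q ⊕ m) (q ⊕ m) R),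
      IsMorsePair Q S ∧ M' = Q * M * S := by
  constructor
  · rintro ⟨Ts, Ti, To, F, K, hTs, hTi, hTo, hM⟩
    exact ⟨_, _, ⟨Ts, Ti, To, F, K, hTs, hTi, hTo, rfl, rfl⟩, hM⟩
  · rintro ⟨_, _, ⟨Ts, Ti, To, F, K, hTs, hTi, hTo, rfl, rfl⟩, hM⟩
    exact ⟨Ts, Ti, To, F, K, hTs, hTi, hTo, hM⟩

theorem stmt2_general (M M' : Matrix (q ⊕ p) (q ⊕ m) R) :
    BlockMorseEquiv M M' ↔
      PencilEquiv (implicitationE R q m p) M (implicitationE R q m p) M' := by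
  simp only [blockMorseEquiv_iff_exists_isMorsePair, pencilEquiv_iff_exists_mul_mul,
    isMorsePair_iff]

end MorseEquiv

/-- Two control systems are Morse equivalent iff their
implicitations are ex-equivalent. -/
theorem stmt2 {q m p : ℕ}
    (A A' : Matrix (Fin q) (Fin q) ℝ) (B B' : Matrix (Fin q) (Fin m) ℝ)
    (C C' : Matrix (Fin p) (Fin q) ℝ) (D D' : Matrix (Fin p) (Fin m) ℝ) :
    MorseEquiv A A' B B' C C' D D' ↔
      ExEquiv (implE q m p) (implH A B C D) (implE q m p) (implH A' B' C' D') :=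
  stmt2_general (fromBlocks A B C D) (fromBlocks A' B' C' D')
end
end

section
/- Let Δ = (E,H) with E,H ∈ ℝ^{l×n} and let 𝒱* be the limit of its first Wong sequence. Then 𝒱* is the largest subspace 𝒱 ⊆ ℝⁿ such that H𝒱 ⊆ E𝒱; that is, H𝒱* ⊆ E𝒱* and every subspace 𝒱 with H𝒱 ⊆ E𝒱 satisfies 𝒱 ⊆ 𝒱*. -/
noncomputable section

open Matrix

/-- The first Wong sequence of the DAE `Δ = (E,H)`:
`𝒱₀ = ℝⁿ`, `𝒱_{i+1} = H⁻¹(E 𝒱_i)`. -/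
def wongV {L N : Type*} [Fintype L] [Fintype N] (E H : Matrix L N ℝ) :
    ℕ → Submodule ℝ (N → ℝ)
  | 0 => ⊤
  | i + 1 => Submodule.comap H.mulVecLin (Submodule.map E.mulVecLin (wongV E H i))

/-!
The operator `f V = H⁻¹(E V)` on subspaces is monotone, and `H V ⊆ E V` says exactly that `V ≤ f V`.
Every such `V` lies below all the iterates `f^[i] ⊤`. These iterates decrease, and their
dimension drops at each step until they reach a fixed point. In dimension at most `n` this can
happen at most `n` times, so `f^[n] ⊤` is a fixed point of `f`, hence the greatest `V ≤ f V`.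
Dimension enters as the height of `⊤` in the lattice of subspaces, which for a module is its length.
-/

open Function Order

section Iterate

variable {α : Type*} [PartialOrder α] {f : α → α} {x : α} {n : ℕ}

theorem iterate_succ_lt_iterate (hf : Monotone f) (hx : f x ≤ x)
    (hfix : ¬ IsFixedPt f (f^[n] x)) : f^[n + 1] x < f^[n] x := by
  refine lt_of_le_of_ne (hf.antitone_iterate_of_map_le hx n.le_succ) ?_
  rwa [iterate_succ_apply']

theorem height_iterate_succ_add_le (hf : Monotone f) (hx : f x ≤ x)
    (hfix : ¬ IsFixedPt f (f^[n] x)) : height (f^[n + 1] x) + (n + 1 : ℕ) ≤ height x := by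
  induction n with
  | zero => exact height_add_one_le (iterate_succ_lt_iterate hf hx hfix)
  | succ n ih =>
    have hfix_pred : ¬ IsFixedPt f (f^[n] x) := fun h => hfix <| by
      rwa [iterate_succ_apply', h.eq]
    calc height (f^[n + 2] x) + (n + 2 : ℕ)
      _ = height (f^[n + 2] x) + 1 + (n + 1 : ℕ) := by push_cast; ring
      _ ≤ height (f^[n + 1] x) + (n + 1 : ℕ) := by
        gcongr
        exact height_add_one_le (iterate_succ_lt_iterate hf hx hfix)
      _ ≤ height x := ih hfix_pred

theorem isFixedPt_iterate_of_height_le (hf : Monotone f) (hx : f x ≤ x) (hn : height x ≤ n) :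
    IsFixedPt f (f^[n] x) := by
  by_contra hfix
  have h : ((n + 1 : ℕ) : ℕ∞) ≤ n :=
    le_add_self.trans <| (height_iterate_succ_add_le hf hx hfix).trans hn
  exact n.not_succ_le_self (Nat.cast_le.mp h)

theorem isGreatest_iterate_top [OrderTop α] (hf : Monotone f) (hn : height (⊤ : α) ≤ n) :
    IsGreatest {a | a ≤ f a} (f^[n] ⊤) :=
  ⟨(isFixedPt_iterate_of_height_le hf le_top hn).ge, fun _ ha =>
    (hf.monotone_iterate_of_le_map ha n.zero_le).trans (hf.iterate n le_top)⟩

end Iterate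

theorem stmt5_general {R M N : Type*} [Ring R] [AddCommGroup M] [Module R M] [AddCommGroup N]
    [Module R N] (E H : M →ₗ[R] N) {n : ℕ} (hn : Module.length R M ≤ n) :
    IsGreatest {V : Submodule R M | V.map H ≤ V.map E} (H.iterateMapComap E n ⊤) := by
  have hmono : Monotone fun V : Submodule R M => (V.map E).comap H :=
    fun _ _ h => Submodule.comap_mono (Submodule.map_mono h)
  rw [Module.length_eq_height] at hn
  simp only [Submodule.map_le_iff_le_comap]
  exact isGreatest_iterate_top hmono hn

theorem wongV_eq_iterateMapComap {L N : Type*} [Fintype L] [Fintype N] (E H : Matrix L N ℝ)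
    (i : ℕ) : wongV E H i = H.mulVecLin.iterateMapComap E.mulVecLin i ⊤ := by
  induction i with
  | zero => rfl
  | succ i ih => simp only [wongV, ih, LinearMap.iterateMapComap, iterate_succ_apply']

/-- The limit `𝒱* = 𝒱_n` of the first Wong sequence is the
largest subspace `𝒱 ⊆ ℝⁿ` with `H𝒱 ⊆ E𝒱`. -/
theorem stmt5 {l n : ℕ} (E H : Matrix (Fin l) (Fin n) ℝ) :
    Submodule.map H.mulVecLin (wongV E H n) ≤ Submodule.map E.mulVecLin (wongV E H n) ∧
    (∀ V : Submodule ℝ (Fin n → ℝ),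
      Submodule.map H.mulVecLin V ≤ Submodule.map E.mulVecLin V → V ≤ wongV E H n) := by
  rw [wongV_eq_iterateMapComap]
  exact (stmt5_general E.mulVecLin H.mulVecLin (by simp)).imp_right fun h _ hV => h hV
end
end

section
/- Let Δ = (E,H) with E,H ∈ ℝ^{l×n} and let Δ^d = (Eᵀ,Hᵀ) be its dual DAE. Then a control system Λ = (A,B,C,D) satisfies Λ ∈ Expl(Δ) if and only if the dual system Λ^d = (Aᵀ,Cᵀ,Bᵀ,Dᵀ) satisfies Λ^d ∈ Expl(Δ^d). -/
noncomputable section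

open Matrix

section StrictEquivalence

variable {R l n : Type*} [CommRing R] [Fintype l] [DecidableEq l] [Fintype n] [DecidableEq n]

theorem inv_transpose_mul_transpose_mul_inv_inv_transpose {Q : Matrix l l R} (hQ : IsUnit Q.det)
    (P : Matrix n n R) (M : Matrix l n R) :
    P⁻¹ᵀ * Mᵀ * Qᵀ⁻¹⁻¹ = (Q * M * P⁻¹)ᵀ := by
  rw [nonsing_inv_nonsing_inv _ (isUnit_det_transpose Q hQ), transpose_mul, transpose_mul,
    Matrix.mul_assoc]

/-- Strict equivalence of the pencils `s E - H` and `s E' - H'`: one invertible pair `(Q, P)`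
transforms `E` into `E'` and `H` into `H'`. It is the equivalence of DAEs that underlies
explicitation. -/
def StrictlyEquivalent (E H E' H' : Matrix l n R) : Prop :=
  ∃ (Q : Matrix l l R) (P : Matrix n n R),
    IsUnit Q.det ∧ IsUnit P.det ∧ Q * E * P⁻¹ = E' ∧ Q * H * P⁻¹ = H'

theorem StrictlyEquivalent.transpose {E H E' H' : Matrix l n R}
    (h : StrictlyEquivalent E H E' H') : StrictlyEquivalent Eᵀ Hᵀ E'ᵀ H'ᵀ := by
  obtain ⟨Q, P, hQ, hP, rfl, rfl⟩ := h
  exact ⟨P⁻¹ᵀ, Qᵀ⁻¹, isUnit_det_transpose _ (isUnit_nonsing_inv_det P hP),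
    isUnit_nonsing_inv_det _ (isUnit_det_transpose Q hQ),
    inv_transpose_mul_transpose_mul_inv_inv_transpose hQ P E,
    inv_transpose_mul_transpose_mul_inv_inv_transpose hQ P H⟩

theorem strictlyEquivalent_transpose_iff {E H E' H' : Matrix l n R} :
    StrictlyEquivalent Eᵀ Hᵀ E'ᵀ H'ᵀ ↔ StrictlyEquivalent E H E' H' :=
  ⟨StrictlyEquivalent.transpose, StrictlyEquivalent.transpose⟩

end StrictEquivalence

section Explicitation

variable {R q m p : Type*} [CommRing R] [Fintype q] [DecidableEq q] [Fintype m] [DecidableEq m]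
  [Fintype p] [DecidableEq p]

/-- The relation `(A, B, C, D) ∈ Expl(E, H)`. The index types `q`, `m`, `p` are those of the states,
inputs and outputs, so that the equations of the DAE are indexed by `q ⊕ p` and its variables by
`q ⊕ m`. -/
def IsExplicitation (E H : Matrix (q ⊕ p) (q ⊕ m) R) (A : Matrix q q R) (B : Matrix q m R)
    (C : Matrix p q R) (D : Matrix p m R) : Prop :=
  StrictlyEquivalent E H (fromBlocks 1 0 0 0) (fromBlocks A B C D)

theorem stmt8_general (E H : Matrix (q ⊕ p) (q ⊕ m) R) (A : Matrix q q R) (B : Matrix q m R)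
    (C : Matrix p q R) (D : Matrix p m R) :
    IsExplicitation E H A B C D ↔ IsExplicitation Eᵀ Hᵀ Aᵀ Cᵀ Bᵀ Dᵀ := by
  unfold IsExplicitation
  rw [← strictlyEquivalent_transpose_iff]
  simp only [fromBlocks_transpose, transpose_one, transpose_zero]

end Explicitation

/-- `Λ = (A,B,C,D) ∈ Expl(Δ)` iff the dual system
`Λ^d = (Aᵀ,Cᵀ,Bᵀ,Dᵀ)` belongs to `Expl(Δ^d)`, where `Δ^d = (Eᵀ,Hᵀ)`. -/
theorem stmt8 {q m p : ℕ}
    (E H : Matrix (Fin q ⊕ Fin p) (Fin q ⊕ Fin m) ℝ) (hE : E.rank = q)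
    (A : Matrix (Fin q) (Fin q) ℝ) (B : Matrix (Fin q) (Fin m) ℝ)
    (C : Matrix (Fin p) (Fin q) ℝ) (D : Matrix (Fin p) (Fin m) ℝ) :
    (∃ (Q : Matrix (Fin q ⊕ Fin p) (Fin q ⊕ Fin p) ℝ)
       (P : Matrix (Fin q ⊕ Fin m) (Fin q ⊕ Fin m) ℝ),
       IsUnit Q.det ∧ IsUnit P.det ∧
       Q * E * P⁻¹ = Matrix.fromBlocks 1 0 0 0 ∧
       Q * H * P⁻¹ = Matrix.fromBlocks A B C D) ↔
    (∃ (Q' : Matrix (Fin q ⊕ Fin m) (Fin q ⊕ Fin m) ℝ)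
       (P' : Matrix (Fin q ⊕ Fin p) (Fin q ⊕ Fin p) ℝ),
       IsUnit Q'.det ∧ IsUnit P'.det ∧
       Q' * Eᵀ * P'⁻¹ = Matrix.fromBlocks 1 0 0 0 ∧
       Q' * Hᵀ * P'⁻¹ = Matrix.fromBlocks Aᵀ Cᵀ Bᵀ Dᵀ) :=
  stmt8_general E H A B C D
end
end

section
/- Let Δ = (E,H) with E,H ∈ ℝ^{l×n} and let M ⊆ ℝⁿ be a linear subspace. Then M is an invariant subspace of Δ (i.e., through every point of M there passes a solution of Δ that remains in M for all time) if and only if HM ⊆ EM. -/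
noncomputable section

open Matrix

/-- A solution of the DAE `E ẋ = H x`: a differentiable map `x : ℝ → ℝⁿ` with
`E x'(t) = H x(t)` for all `t`. -/
def IsSolution {l n : ℕ} (E H : Matrix (Fin l) (Fin n) ℝ)
    (x : ℝ → (Fin n → ℝ)) : Prop :=
  Differentiable ℝ x ∧ ∀ t : ℝ, E.mulVec (deriv x t) = H.mulVec (x t)

/-- `M` is an invariant subspace of the DAE `E ẋ = H x`: through every point
of `M` there passes a solution remaining in `M` for all time. -/
def IsInvariantSubspace {l n : ℕ} (E H : Matrix (Fin l) (Fin n) ℝ)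
    (M : Submodule ℝ (Fin n → ℝ)) : Prop :=
  ∀ x0 ∈ M, ∃ x : ℝ → (Fin n → ℝ),
    IsSolution E H x ∧ x 0 = x0 ∧ ∀ t : ℝ, x t ∈ M

/-!
A curve that stays in a closed subspace `M` has its derivative in `M`, so a solution in `M` through
`x₀` gives `H x₀ = E (x' 0) ∈ E M`. Conversely, if `H M ⊆ E M` then, as vector spaces are
projective, `H` restricted to `M` lifts through `E` to an endomorphism `A` of `M`, that is
`E ∘ A = H` on `M`, and `t ↦ exp (t A) x₀` is a solution in `M`.
-/

section LinearAlgebra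

variable {R P V W : Type*} [Semiring R] [AddCommMonoid P] [Module R P] [AddCommMonoid V]
  [Module R V] [AddCommMonoid W] [Module R W]

theorem exists_comp_eq_of_range_le [Module.Projective R P] {f : V →ₗ[R] W} {g : P →ₗ[R] W}
    (h : g.range ≤ f.range) : ∃ A : P →ₗ[R] V, f ∘ₗ A = g := by
  obtain ⟨A, hA⟩ := Module.projective_lifting_property f.rangeRestrict
    (g.codRestrict f.range fun p => h (g.mem_range_self p)) f.surjective_rangeRestrict
  exact ⟨A, LinearMap.ext fun p => congrArg Subtype.val (LinearMap.congr_fun hA p)⟩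

theorem exists_end_apply_eq_of_map_le_map {E H : V →ₗ[R] W} {M : Submodule R V}
    [Module.Projective R M] (h : M.map H ≤ M.map E) :
    ∃ A : Module.End R M, ∀ v : M, E (A v) = H v := by
  have hrange : (H.domRestrict M).range ≤ (E.domRestrict M).range := by
    simpa only [LinearMap.range_domRestrict] using h
  obtain ⟨A, hA⟩ := exists_comp_eq_of_range_le hrange
  exact ⟨A, LinearMap.congr_fun hA⟩

end LinearAlgebra

theorem deriv_mem_of_forall_mem {𝕜 V : Type*} [NontriviallyNormedField 𝕜]
    [NormedAddCommGroup V] [NormedSpace 𝕜 V] {M : Submodule 𝕜 V} (hM : IsClosed (M : Set V))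
    {x : 𝕜 → V} (hx : ∀ t, x t ∈ M) (t : 𝕜) : deriv x t ∈ M := by
  have hspan : Submodule.span 𝕜 (x '' Set.univ) ≤ M :=
    Submodule.span_le.2 (Set.image_subset_iff.2 fun s _ => hx s)
  exact closure_minimal hspan hM
    (range_deriv_subset_closure_span_image x dense_univ (Set.mem_range_self t))

theorem exists_forall_hasDerivAt_apply {𝕜 V : Type*} [RCLike 𝕜] [NormedAddCommGroup V]
    [NormedSpace 𝕜 V] [CompleteSpace V] (A : V →L[𝕜] V) (v : V) :
    ∃ y : 𝕜 → V, y 0 = v ∧ ∀ t, HasDerivAt y (A (y t)) t :=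
  ⟨fun t => NormedSpace.exp (t • A) v, by simp, fun t =>
    (ContinuousLinearMap.apply 𝕜 V v).hasFDerivAt.comp_hasDerivAt t
      (hasDerivAt_exp_smul_const' A t)⟩

section DAE

variable {𝕜 V W : Type*} [NontriviallyNormedField 𝕜] [NormedAddCommGroup V] [NormedSpace 𝕜 V]
  [AddCommGroup W] [Module 𝕜 W]

/-- A solution of the linear DAE `E ẋ = H x` on a normed space `V`. No topology is put on the
codomain `W`, and time ranges over the scalar field `𝕜`, so that for `𝕜 = ℂ` solutions are entire
curves. -/
def IsDAESolution (E H : V →ₗ[𝕜] W) (x : 𝕜 → V) : Prop :=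
  Differentiable 𝕜 x ∧ ∀ t, E (deriv x t) = H (x t)

/-- Invariance of a subspace `M` under the linear DAE `E ẋ = H x` on a normed space: every point of
`M` is the value at time `0` of some solution that stays in `M`. Solutions need not be unique, and
other solutions through the same point may leave `M`. -/
def IsDAEInvariant (E H : V →ₗ[𝕜] W) (M : Submodule 𝕜 V) : Prop :=
  ∀ x₀ ∈ M, ∃ x : 𝕜 → V, IsDAESolution E H x ∧ x 0 = x₀ ∧ ∀ t, x t ∈ M

theorem IsDAEInvariant.map_le_map {E H : V →ₗ[𝕜] W} {M : Submodule 𝕜 V}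
    (hM : IsClosed (M : Set V)) (h : IsDAEInvariant E H M) : M.map H ≤ M.map E := by
  rintro _ ⟨x₀, hx₀, rfl⟩
  obtain ⟨x, ⟨-, hx⟩, rfl, hxM⟩ := h x₀ hx₀
  exact ⟨deriv x 0, deriv_mem_of_forall_mem hM hxM 0, hx 0⟩

end DAE

theorem isDAEInvariant_of_apply_eq {𝕜 V W : Type*} [RCLike 𝕜] [NormedAddCommGroup V]
    [NormedSpace 𝕜 V] [AddCommGroup W] [Module 𝕜 W] {E H : V →ₗ[𝕜] W} {M : Submodule 𝕜 V}
    [CompleteSpace M] (A : M →L[𝕜] M) (hA : ∀ v : M, E (A v) = H v) : IsDAEInvariant E H M := by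
  intro x₀ hx₀
  obtain ⟨y, hy₀, hy⟩ := exists_forall_hasDerivAt_apply A ⟨x₀, hx₀⟩
  have hderiv (t : 𝕜) : HasDerivAt (fun s => (y s : V)) (A (y t)) t :=
    M.subtypeL.hasFDerivAt.comp_hasDerivAt t (hy t)
  have hsol : IsDAESolution E H (fun t => (y t : V)) :=
    ⟨fun t => (hderiv t).differentiableAt, fun t => (hderiv t).deriv ▸ hA (y t)⟩
  exact ⟨fun t => y t, hsol, congrArg Subtype.val hy₀, fun t => (y t).2⟩

theorem stmt12_general {𝕜 V W : Type*} [RCLike 𝕜] [NormedAddCommGroup V] [NormedSpace 𝕜 V]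
    [AddCommGroup W] [Module 𝕜 W] (E H : V →ₗ[𝕜] W) (M : Submodule 𝕜 V)
    [FiniteDimensional 𝕜 M] :
    IsDAEInvariant E H M ↔ M.map H ≤ M.map E := by
  refine ⟨IsDAEInvariant.map_le_map M.closed_of_finiteDimensional, fun h => ?_⟩
  obtain ⟨A, hA⟩ := exists_end_apply_eq_of_map_le_map h
  have : CompleteSpace M := FiniteDimensional.complete 𝕜 M
  exact isDAEInvariant_of_apply_eq (LinearMap.toContinuousLinearMap A) hA

/-- `M` is an invariant subspace of `Δ = (E,H)` iff `HM ⊆ EM`. -/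
theorem stmt12 {l n : ℕ} (E H : Matrix (Fin l) (Fin n) ℝ)
    (M : Submodule ℝ (Fin n → ℝ)) :
    IsInvariantSubspace E H M ↔
      Submodule.map H.mulVecLin M ≤ Submodule.map E.mulVecLin M :=
  stmt12_general E.mulVecLin H.mulVecLin M
end
end

section
/- Let Λ = (A,B) and Λ̃ = (Ã,B̃) be linear control systems without outputs, with A,Ã ∈ ℝ^{n×n} and B,B̃ ∈ ℝ^{n×m}. Then the following are equivalent: (a) there exists an invertible matrix T ∈ GL(n+m,ℝ) such that for every pair of differentiable maps (z,u) : ℝ → ℝⁿ × ℝ^m, the pair (z,u) satisfies ż(t) = Az(t) + Bu(t) for all t if and only if the pair (z̃,ũ) defined by (z̃(t),ũ(t)) = T·(z(t),u(t)) satisfies z̃'(t) = Ãz̃(t) + B̃ũ(t) for all t; (b) Λ and Λ̃ are feedback equivalent, i.e., there exist T_s ∈ GL(n,ℝ), T_i ∈ GL(m,ℝ) and F ∈ ℝ^{m×n} such that Ã = T_s(A + BF)T_s⁻¹ and B̃ = T_s B T_i⁻¹. -/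
noncomputable section

open Matrix

/-!
An invertible `T` carries the trajectories of `Λ = (A, B)` to trajectories of `Λ' = (A', B')` only
if it respects the velocities allowed by the two systems. Since some trajectory of `Λ` passes
through any given state `x` and input `u` with any given input velocity `v`, writing
`T = [P Q; C S]` this says

  `P (A x + B u) + Q v = A' (P x + Q u) + B' (C x + S u)` for all `x`, `u`, `v`.

The freedom of `v` forces `Q = 0`, so `P` and `S` are invertible and the rest of the identity reads
`P A = A' P + B' C` and `P B = B' S`; these equations are feedback equivalence with `Ts = P`,
`Ti = S` and `F = -S⁻¹ C`. Conversely, they give back the identity with `Q = 0`, and since `P` is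
injective, `T` then reflects trajectories as well as preserving them.
-/

section BlockRelations

variable {ι κ R : Type*} [Fintype ι] [Fintype κ]

theorem forall_velocity_relation_iff [Semiring R] {ι' κ' : Type*} [Fintype ι'] [Fintype κ']
    {A : Matrix ι ι R} {B : Matrix ι κ R} {A' : Matrix ι' ι' R} {B' : Matrix ι' κ' R}
    {P : Matrix ι' ι R} {Q : Matrix ι' κ R} {C : Matrix κ' ι R} {S : Matrix κ' κ R} :
    (∀ x u v, P *ᵥ (A *ᵥ x + B *ᵥ u) + Q *ᵥ v =
        A' *ᵥ (P *ᵥ x + Q *ᵥ u) + B' *ᵥ (C *ᵥ x + S *ᵥ u)) ↔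
      Q = 0 ∧ P * A = A' * P + B' * C ∧ P * B = B' * S := by
  constructor
  · intro h
    have hQ : Q = 0 := ext_iff_mulVec.2 fun v => by simpa using h 0 0 v
    subst hQ
    refine ⟨rfl, ext_iff_mulVec.2 fun x => ?_, ext_iff_mulVec.2 fun u => ?_⟩
    · simpa [add_mulVec] using h x 0 0
    · simpa using h 0 u 0
  · rintro ⟨rfl, hA, hB⟩ x u v
    simp only [mulVec_add, mulVec_mulVec, zero_mulVec, add_zero, hA, hB, add_mulVec, add_assoc]

/-- Feedback equivalence of the control systems `(A, B)` and `(A', B')`: they agree up to a change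
of state coordinates `Ts`, a change of input coordinates `Ti` and a state feedback `F`. -/
def FeedbackEquivalent [CommRing R] [DecidableEq ι] [DecidableEq κ] (A : Matrix ι ι R)
    (B : Matrix ι κ R) (A' : Matrix ι ι R) (B' : Matrix ι κ R) : Prop :=
  ∃ (Ts : Matrix ι ι R) (Ti : Matrix κ κ R) (F : Matrix κ ι R), IsUnit Ts.det ∧ IsUnit Ti.det ∧
    A' = Ts * (A + B * F) * Ts⁻¹ ∧ B' = Ts * B * Ti⁻¹

theorem feedbackEquivalent_iff_exists_block_relations [CommRing R] [DecidableEq ι] [DecidableEq κ]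
    {A A' : Matrix ι ι R} {B B' : Matrix ι κ R} :
    FeedbackEquivalent A B A' B' ↔
      ∃ (P : Matrix ι ι R) (C : Matrix κ ι R) (S : Matrix κ κ R), IsUnit P.det ∧ IsUnit S.det ∧
        P * A = A' * P + B' * C ∧ P * B = B' * S := by
  constructor
  · rintro ⟨Ts, Ti, F, hTs, hTi, hA, hB⟩
    have hA' : A' * Ts = Ts * (A + B * F) := by rw [hA, nonsing_inv_mul_cancel_right _ _ hTs]
    have hB' : B' * Ti = Ts * B := by rw [hB, nonsing_inv_mul_cancel_right _ _ hTi]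
    refine ⟨Ts, -(Ti * F), Ti, hTs, hTi, ?_, hB'.symm⟩
    rw [hA', Matrix.mul_neg, ← Matrix.mul_assoc, hB', Matrix.mul_add, Matrix.mul_assoc,
      add_neg_cancel_right]
  · rintro ⟨P, C, S, hP, hS, hA, hB⟩
    have hB' : B' = P * B * S⁻¹ := by rw [hB, mul_nonsing_inv_cancel_right _ _ hS]
    have hA' : P * (A + B * -(S⁻¹ * C)) = A' * P := by
      rw [Matrix.mul_add, Matrix.mul_neg, Matrix.mul_neg, ← Matrix.mul_assoc, ← Matrix.mul_assoc,
        ← hB', hA, add_neg_cancel_right]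
    refine ⟨P, S, -(S⁻¹ * C), hP, hS, ?_, hB'⟩
    rw [hA', mul_nonsing_inv_cancel_right _ _ hP]

end BlockRelations

section Trajectories

variable {𝕜 : Type*} [RCLike 𝕜]

theorem exists_hasDerivAt_eq_clm_apply {E : Type*} [NormedAddCommGroup E] [NormedSpace 𝕜 E]
    [CompleteSpace E] (L : E →L[𝕜] E) (w₀ : E) :
    ∃ w : 𝕜 → E, w 0 = w₀ ∧ ∀ t, HasDerivAt w (L (w t)) t := by
  refine ⟨fun t => NormedSpace.exp (t • L) w₀, by simp, fun t => ?_⟩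
  simpa using (hasDerivAt_exp_smul_const' (𝕂 := 𝕜) L t).clm_apply (hasDerivAt_const t w₀)

theorem exists_trajectory_with_initial_data {X U : Type*}
    [NormedAddCommGroup X] [NormedSpace 𝕜 X] [CompleteSpace X]
    [NormedAddCommGroup U] [NormedSpace 𝕜 U] [CompleteSpace U]
    (A : X →L[𝕜] X) (B : U →L[𝕜] X) (x₀ : X) (u₀ v₀ : U) :
    ∃ (z : 𝕜 → X) (u : 𝕜 → U), Differentiable 𝕜 u ∧ (∀ t, HasDerivAt z (A (z t) + B (u t)) t) ∧
      z 0 = x₀ ∧ u 0 = u₀ ∧ deriv u 0 = v₀ := by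
  -- The input velocity becomes a further, constant state: `ż = A z + B u`, `u̇ = v`, `v̇ = 0`.
  let L : X × U × U →L[𝕜] X × U × U :=
    (A.coprod (B.comp (.fst 𝕜 U U))).prod (((ContinuousLinearMap.snd 𝕜 U U).prod 0).comp
      (.snd 𝕜 X (U × U)))
  obtain ⟨w, hw₀, hw⟩ := exists_hasDerivAt_eq_clm_apply L (x₀, u₀, v₀)
  have hu (t : 𝕜) : HasDerivAt (fun s => (w s).2.1) (w t).2.2 t := (hw t).snd.fst
  refine ⟨fun t => (w t).1, fun t => (w t).2.1, fun t => (hu t).differentiableAt,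
    fun t => (hw t).fst, congrArg (·.1) hw₀, congrArg (·.2.1) hw₀, ?_⟩
  rw [(hu 0).deriv, hw₀]

theorem hasDerivAt_matrix_mulVec {ι κ : Type*} [Fintype ι] [Finite κ] (P : Matrix κ ι 𝕜)
    {z : 𝕜 → ι → 𝕜} {z' : ι → 𝕜} {t : 𝕜} (hz : HasDerivAt z z' t) :
    HasDerivAt (fun s => P *ᵥ z s) (P *ᵥ z') t :=
  have := Fintype.ofFinite κ
  P.mulVecLin.toContinuousLinearMap.hasFDerivAt.comp_hasDerivAt t hz

variable {ι κ : Type*} [Fintype ι] [Fintype κ]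

/-- Trajectories of the control system `(A, B)`: `w = (z, u)` satisfies `ż = A z + B u`, where
`z` and `u` are its components along `ι` and `κ`. Differentiability is not part of the notion:
since `deriv` is `0` at points where the state is not differentiable, statements about trajectories
assume it separately. -/
def IsTrajectory (A : Matrix ι ι 𝕜) (B : Matrix ι κ 𝕜) (w : 𝕜 → ι ⊕ κ → 𝕜) : Prop :=
  ∀ t, deriv (fun s => w s ∘ Sum.inl) t = A *ᵥ (w t ∘ Sum.inl) + B *ᵥ (w t ∘ Sum.inr)

variable {ι' κ' : Type*} [Fintype ι'] [Fintype κ']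
  {A : Matrix ι ι 𝕜} {B : Matrix ι κ 𝕜} {A' : Matrix ι' ι' 𝕜} {B' : Matrix ι' κ' 𝕜}
  {P : Matrix ι' ι 𝕜} {Q : Matrix ι' κ 𝕜} {C : Matrix κ' ι 𝕜} {S : Matrix κ' κ 𝕜}
  {z : 𝕜 → ι → 𝕜} {u : 𝕜 → κ → 𝕜}

theorem isTrajectory_fromBlocks_mulVec_iff (hz : Differentiable 𝕜 z) (hu : Differentiable 𝕜 u) :
    IsTrajectory A' B' (fun t => fromBlocks P Q C S *ᵥ Sum.elim (z t) (u t)) ↔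
      ∀ t, P *ᵥ deriv z t + Q *ᵥ deriv u t =
        A' *ᵥ (P *ᵥ z t + Q *ᵥ u t) + B' *ᵥ (C *ᵥ z t + S *ᵥ u t) := by
  simp only [IsTrajectory, fromBlocks_mulVec, Sum.elim_comp_inl, Sum.elim_comp_inr]
  refine forall_congr' fun t => ?_
  have hderiv := (hasDerivAt_matrix_mulVec P (hz t).hasDerivAt).fun_add
    (hasDerivAt_matrix_mulVec Q (hu t).hasDerivAt)
  rw [hderiv.deriv]

theorem velocity_relation_of_maps_trajectories
    (h : ∀ (z : 𝕜 → ι → 𝕜) (u : 𝕜 → κ → 𝕜), Differentiable 𝕜 z → Differentiable 𝕜 u →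
      IsTrajectory A B (fun t => Sum.elim (z t) (u t)) →
      IsTrajectory A' B' (fun t => fromBlocks P Q C S *ᵥ Sum.elim (z t) (u t)))
    (x₀ : ι → 𝕜) (u₀ v₀ : κ → 𝕜) :
    P *ᵥ (A *ᵥ x₀ + B *ᵥ u₀) + Q *ᵥ v₀ =
      A' *ᵥ (P *ᵥ x₀ + Q *ᵥ u₀) + B' *ᵥ (C *ᵥ x₀ + S *ᵥ u₀) := by
  obtain ⟨z, u, hu, hzu, rfl, rfl, rfl⟩ := exists_trajectory_with_initial_data
    A.mulVecLin.toContinuousLinearMap B.mulVecLin.toContinuousLinearMap x₀ u₀ v₀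
  have hz : Differentiable 𝕜 z := fun t => (hzu t).differentiableAt
  have hderiv : ∀ t, deriv z t = A *ᵥ z t + B *ᵥ u t := fun t => (hzu t).deriv
  rw [← hderiv]
  exact (isTrajectory_fromBlocks_mulVec_iff hz hu).1 (h z u hz hu hderiv) 0

theorem isTrajectory_iff_of_block_relations (hP : Function.Injective P.mulVec)
    (hA : P * A = A' * P + B' * C) (hB : P * B = B' * S)
    (hz : Differentiable 𝕜 z) (hu : Differentiable 𝕜 u) :
    IsTrajectory A B (fun t => Sum.elim (z t) (u t)) ↔
      IsTrajectory A' B' (fun t => fromBlocks P 0 C S *ᵥ Sum.elim (z t) (u t)) := by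
  rw [isTrajectory_fromBlocks_mulVec_iff hz hu]
  refine forall_congr' fun t => ?_
  rw [← forall_velocity_relation_iff.2 ⟨rfl, hA, hB⟩ (z t) (u t) (deriv u t), add_left_inj]
  exact hP.eq_iff.symm

end Trajectories

theorem stmt16_general {𝕜 ι κ : Type*} [RCLike 𝕜] [Fintype ι] [Fintype κ] [DecidableEq ι]
    [DecidableEq κ] (A A' : Matrix ι ι 𝕜) (B B' : Matrix ι κ 𝕜) :
    List.TFAE [
      ∃ T : Matrix (ι ⊕ κ) (ι ⊕ κ) 𝕜, IsUnit T.det ∧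
        ∀ (z : 𝕜 → ι → 𝕜) (u : 𝕜 → κ → 𝕜), Differentiable 𝕜 z → Differentiable 𝕜 u →
          IsTrajectory A B (fun t => Sum.elim (z t) (u t)) →
          IsTrajectory A' B' (fun t => T *ᵥ Sum.elim (z t) (u t)),
      ∃ T : Matrix (ι ⊕ κ) (ι ⊕ κ) 𝕜, IsUnit T.det ∧
        ∀ (z : 𝕜 → ι → 𝕜) (u : 𝕜 → κ → 𝕜), Differentiable 𝕜 z → Differentiable 𝕜 u →
          (IsTrajectory A B (fun t => Sum.elim (z t) (u t)) ↔
            IsTrajectory A' B' (fun t => T *ᵥ Sum.elim (z t) (u t))),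
      FeedbackEquivalent A B A' B'] := by
  tfae_have 2 → 1 := fun ⟨T, hT, h⟩ => ⟨T, hT, fun z u hz hu => (h z u hz hu).1⟩
  tfae_have 1 → 3 := by
    rintro ⟨T, hT, h⟩
    rw [← fromBlocks_toBlocks T] at hT h
    obtain ⟨hQ, hA, hB⟩ :=
      forall_velocity_relation_iff.1 (velocity_relation_of_maps_trajectories h)
    rw [hQ, det_fromBlocks_zero₁₂, IsUnit.mul_iff] at hT
    exact feedbackEquivalent_iff_exists_block_relations.2 ⟨_, _, _, hT.1, hT.2, hA, hB⟩
  tfae_have 3 → 2 := by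
    intro h
    obtain ⟨P, C, S, hP, hS, hA, hB⟩ := feedbackEquivalent_iff_exists_block_relations.1 h
    have hP_inj := mulVec_injective_of_isUnit ((isUnit_iff_isUnit_det P).2 hP)
    have hT : IsUnit (fromBlocks P 0 C S).det := by
      rw [det_fromBlocks_zero₁₂]
      exact hP.mul hS
    exact ⟨_, hT, fun z u => isTrajectory_iff_of_block_relations hP_inj hA hB⟩
  tfae_finish

/-- For two control systems without outputs `Λ = (A,B)` and
`Λ̃ = (A',B')`, the existence of an invertible matrix `T ∈ GL(n+m,ℝ)` mapping
trajectories of `Λ` exactly onto trajectories of `Λ̃` is equivalent to feedback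
equivalence of `Λ` and `Λ̃`. -/
theorem stmt16 {n m : ℕ}
    (A A' : Matrix (Fin n) (Fin n) ℝ) (B B' : Matrix (Fin n) (Fin m) ℝ) :
    (∃ T : Matrix (Fin n ⊕ Fin m) (Fin n ⊕ Fin m) ℝ, IsUnit T.det ∧
      ∀ (z : ℝ → (Fin n → ℝ)) (u : ℝ → (Fin m → ℝ)),
        Differentiable ℝ z → Differentiable ℝ u →
        ((∀ t : ℝ, deriv z t = A.mulVec (z t) + B.mulVec (u t)) ↔
          (∀ t : ℝ,
            deriv (fun s => fun i => T.mulVec (Sum.elim (z s) (u s)) (Sum.inl i)) t =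
              A'.mulVec (fun i => T.mulVec (Sum.elim (z t) (u t)) (Sum.inl i)) +
              B'.mulVec (fun j => T.mulVec (Sum.elim (z t) (u t)) (Sum.inr j))))) ↔
    (∃ (Ts : Matrix (Fin n) (Fin n) ℝ) (Ti : Matrix (Fin m) (Fin m) ℝ)
       (F : Matrix (Fin m) (Fin n) ℝ),
       IsUnit Ts.det ∧ IsUnit Ti.det ∧
       A' = Ts * (A + B * F) * Ts⁻¹ ∧ B' = Ts * B * Ti⁻¹) :=
  (stmt16_general A A' B B').out 1 2
end
end

section
/- Let Δ = (E,H) with E,H ∈ ℝ^{l×n}, rank E = q, m = n−q, p = l−q, and let Λ = (A,B,C,D) be a (Q,P)-explicitation of Δ. Then for every i ∈ ℕ there exists a matrix F_i ∈ ℝ^{m×q} such that (A + BF_i)𝒱_{i+1}(Λ) ⊆ 𝒱_i(Λ), (C + DF_i)𝒱_{i+1}(Λ) = {0}, and P𝒱_{i+1}(Δ) = {(v, F_i v + u) : v ∈ 𝒱_{i+1}(Λ), u ∈ 𝒰_i(Λ)}, where 𝒱_{i+1}(Δ) is the first Wong sequence of Δ. -/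
noncomputable section

open Matrix

/-- For a system `Λ = (A,B,C,D)`:
`𝒱₀(Λ) = ℝ^q`, `𝒱_{i+1}(Λ) = [A;C]⁻¹((𝒱_i(Λ)×{0}) + Im [B;D])`. -/
def sysV {q m p : ℕ} (A : Matrix (Fin q) (Fin q) ℝ) (B : Matrix (Fin q) (Fin m) ℝ)
    (C : Matrix (Fin p) (Fin q) ℝ) (D : Matrix (Fin p) (Fin m) ℝ) :
    ℕ → Submodule ℝ (Fin q → ℝ)
  | 0 => ⊤
  | i + 1 => Submodule.comap (Matrix.fromRows A C).mulVecLin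
      (Submodule.map (Matrix.fromRows (1 : Matrix (Fin q) (Fin q) ℝ)
          (0 : Matrix (Fin p) (Fin q) ℝ)).mulVecLin (sysV A B C D i)
        ⊔ LinearMap.range (Matrix.fromRows B D).mulVecLin)

/-- `𝒰_i(Λ) = [B;D]⁻¹(𝒱_i(Λ)×{0})`. -/
def sysU {q m p : ℕ} (A : Matrix (Fin q) (Fin q) ℝ) (B : Matrix (Fin q) (Fin m) ℝ)
    (C : Matrix (Fin p) (Fin q) ℝ) (D : Matrix (Fin p) (Fin m) ℝ) (i : ℕ) :
    Submodule ℝ (Fin m → ℝ) :=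
  Submodule.comap (Matrix.fromRows B D).mulVecLin
    (Submodule.map (Matrix.fromRows (1 : Matrix (Fin q) (Fin q) ℝ)
      (0 : Matrix (Fin p) (Fin q) ℝ)).mulVecLin (sysV A B C D i))

/-!
For each `i`, everything is controlled by one linear relation between states and inputs: the pairs
`(x, u)` with `Ax + Bu ∈ 𝒱_i(Λ)` and `Cx + Du = 0`. Its projection to the states is `𝒱_{i+1}(Λ)`,
its fibre over `0` is `𝒰_i(Λ)`, and in the coordinates given by `Q` and `P` it is `𝒱_{i+1}(Δ)`. A
linear relation over a field contains the graph, over its domain, of some globally defined linear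
map, and is the sum of that graph and its fibre over `0`. Such a linear map is the feedback `F_i`.
-/

section LinearRelation

variable {K X Y Z : Type*} [AddCommGroup X] [AddCommGroup Y] [AddCommGroup Z]

theorem exists_map_id_prod_map_fst_le [DivisionRing K] [Module K X] [Module K Y]
    (W : Submodule K (X × Y)) :
    ∃ f : X →ₗ[K] Y, (W.map (LinearMap.fst K X Y)).map (LinearMap.id.prod f) ≤ W := by
  let π : W →ₗ[K] X := (LinearMap.fst K X Y).domRestrict W
  obtain ⟨s, hs⟩ := π.rangeRestrict.exists_rightInverse_of_surjective π.range_rangeRestrict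
  obtain ⟨g, hg⟩ := s.exists_extend
  refine ⟨LinearMap.snd K X Y ∘ₗ W.subtype ∘ₗ g, ?_⟩
  rintro _ ⟨_, ⟨w, hw, rfl⟩, rfl⟩
  have hfst : (g w.1 : X × Y).1 = w.1 := by
    let x : LinearMap.range π := π.rangeRestrict ⟨w, hw⟩
    have hgs : g w.1 = s x := LinearMap.congr_fun hg x
    rw [hgs]
    exact congrArg Subtype.val (LinearMap.congr_fun hs x)
  have hmem : ((g w.1 : X × Y).1, (g w.1 : X × Y).2) ∈ W := (g w.1).2
  rwa [hfst] at hmem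

variable [Ring K] [Module K X] [Module K Y] [Module K Z]

theorem map_id_prod_sup_map_inr_eq {W : Submodule K (X × Y)} {f : X →ₗ[K] Y}
    (hf : (W.map (LinearMap.fst K X Y)).map (LinearMap.id.prod f) ≤ W) :
    (W.map (LinearMap.fst K X Y)).map (LinearMap.id.prod f) ⊔
      (W.comap (LinearMap.inr K X Y)).map (LinearMap.inr K X Y) = W := by
  refine le_antisymm (sup_le hf (Submodule.map_comap_le _ _)) ?_
  rintro ⟨x, y⟩ hxy
  have hx : x ∈ W.map (LinearMap.fst K X Y) := Submodule.mem_map_of_mem hxy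
  have hgraph : (x, f x) ∈ W := hf (Submodule.mem_map_of_mem hx)
  have hfibre : (0, y - f x) ∈ W := by simpa using sub_mem hxy hgraph
  have hsum : (x, f x) + (0, y - f x) = (x, y) := by simp
  rw [← hsum]
  exact Submodule.add_mem_sup (Submodule.mem_map_of_mem hx)
    (Submodule.mem_map_of_mem (f := LinearMap.inr K X Y) hfibre)

theorem map_fst_comap_coprod (f : X →ₗ[K] Z) (g : Y →ₗ[K] Z) (S : Submodule K Z) :
    (S.comap (f.coprod g)).map (LinearMap.fst K X Y) = (S ⊔ LinearMap.range g).comap f := by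
  ext x
  simp only [Submodule.mem_map, Submodule.mem_comap, LinearMap.coprod_apply, LinearMap.fst_apply,
    Submodule.mem_sup, LinearMap.mem_range]
  constructor
  · rintro ⟨⟨x, y⟩, hxy, rfl⟩
    exact ⟨_, hxy, _, ⟨-y, rfl⟩, by simp⟩
  · rintro ⟨z, hz, _, ⟨y, rfl⟩, h⟩
    exact ⟨(x, -y), by simpa [← h] using hz, rfl⟩

end LinearRelation

section Blocks

variable {R l m n k : Type*} [CommSemiring R] [Fintype m] [Fintype n]

theorem mulVecLin_fromRows (M : Matrix l n R) (N : Matrix k n R) :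
    (fromRows M N).mulVecLin =
      (LinearEquiv.sumArrowLequivProdArrow l k R R).symm.toLinearMap ∘ₗ
        M.mulVecLin.prod N.mulVecLin := by
  ext v (j | j) <;> simp

theorem mulVecLin_fromCols (M : Matrix l n R) (N : Matrix l m R) :
    (fromCols M N).mulVecLin =
      M.mulVecLin.coprod N.mulVecLin ∘ₗ
        (LinearEquiv.sumArrowLequivProdArrow n m R R).toLinearMap :=
  LinearMap.ext (fromCols_mulVec M N)

theorem map_mulVecLin_fromRows_le_iff [DecidableEq m] {M : Matrix m n R} {N : Matrix k n R}
    {V : Submodule R (n → R)} {S : Submodule R (m → R)} :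
    V.map (fromRows M N).mulVecLin ≤
        S.map (fromRows (1 : Matrix m m R) (0 : Matrix k m R)).mulVecLin ↔
      V.map M.mulVecLin ≤ S ∧ V.map N.mulVecLin = ⊥ := by
  have hmem (x : n → R) : fromRows M N *ᵥ x ∈
      S.map (fromRows (1 : Matrix m m R) (0 : Matrix k m R)).mulVecLin ↔
        M *ᵥ x ∈ S ∧ N *ᵥ x = 0 := by
    simp [fromRows_mulVec, Sum.elim_eq_iff, eq_comm (a := (0 : k → R))]
  simp only [← le_bot_iff, Submodule.map_le_iff_le_comap]
  simp only [SetLike.le_def, Submodule.mem_comap, mulVecLin_apply, hmem,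
    Submodule.mem_bot, forall_and]

end Blocks

section AdmissiblePairs

variable {R n m p : Type*} [CommSemiring R] [Fintype n] [DecidableEq n] [Fintype m]

/-- The pairs of a state `v` and an input `w` with `Av + Bw ∈ V` and `Cv + Dw = 0`: those which
the system `(A,B,C,D)` steers into `V` with zero output. Both conditions are encoded at once as
`[A;C] v + [B;D] w ∈ V × {0}`. -/
def admissiblePairs (A : Matrix n n R) (B : Matrix n m R) (C : Matrix p n R) (D : Matrix p m R)
    (V : Submodule R (n → R)) : Submodule R ((n → R) × (m → R)) :=
  (V.map (fromRows (1 : Matrix n n R) (0 : Matrix p n R)).mulVecLin).comap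
    ((fromRows A C).mulVecLin.coprod (fromRows B D).mulVecLin)

variable {A : Matrix n n R} {B : Matrix n m R} {C : Matrix p n R} {D : Matrix p m R}

theorem map_id_prod_le_admissiblePairs_iff {F : Matrix m n R} {S V : Submodule R (n → R)} :
    S.map (LinearMap.id.prod F.mulVecLin) ≤ admissiblePairs A B C D V ↔
      S.map (A + B * F).mulVecLin ≤ V ∧ S.map (C + D * F).mulVecLin = ⊥ := by
  have hcomp : (fromRows A C).mulVecLin.coprod (fromRows B D).mulVecLin ∘ₗ
      LinearMap.id.prod F.mulVecLin = (fromRows (A + B * F) (C + D * F)).mulVecLin := by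
    rw [LinearMap.coprod_comp_prod, LinearMap.comp_id, ← mulVecLin_mul,
      ← mulVecLin_add, fromRows_mul]
    congr 1
    ext (i | i) j <;> rfl
  rw [admissiblePairs, ← Submodule.map_le_iff_le_comap, ← Submodule.map_comp, hcomp,
    map_mulVecLin_fromRows_le_iff]

theorem comap_map_fromBlocks_eq_map_admissiblePairs (W : Submodule R (n ⊕ m → R)) :
    (W.map (fromBlocks (1 : Matrix n n R) 0 (0 : Matrix p n R) 0).mulVecLin).comap
        (fromBlocks A B C D).mulVecLin =
      (admissiblePairs A B C D (W.map (LinearMap.funLeft R R Sum.inl))).map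
        (LinearEquiv.sumArrowLequivProdArrow n m R R).symm.toLinearMap := by
  have hE : (fromBlocks (1 : Matrix n n R) (0 : Matrix n m R) (0 : Matrix p n R) 0).mulVecLin
      = (fromRows 1 0).mulVecLin ∘ₗ LinearMap.funLeft R R Sum.inl := by
    rw [← fromCols_fromRows_eq_fromBlocks, fromRows_zero, mulVecLin_fromCols,
      mulVecLin_zero, LinearMap.coprod_zero_right]
    rfl
  rw [hE, Submodule.map_comp, ← fromCols_fromRows_eq_fromBlocks, mulVecLin_fromCols,
    Submodule.comap_comp, Submodule.map_equiv_eq_comap_symm, LinearEquiv.symm_symm]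
  rfl

end AdmissiblePairs

section WongSequence

theorem map_mulVecLin_wongV {L L' N N' : Type*} [Fintype L] [Fintype L'] [Fintype N] [Fintype N']
    {E H : Matrix L N ℝ} {E' H' : Matrix L' N' ℝ} {Q : Matrix L' L ℝ} {P : Matrix N' N ℝ}
    (hQ : Function.Injective Q.mulVec) (hP : Function.Surjective P.mulVec)
    (hE : E' * P = Q * E) (hH : H' * P = Q * H) (i : ℕ) :
    (wongV E H i).map P.mulVecLin = wongV E' H' i := by
  induction i with
  | zero => exact (Submodule.map_top _).trans (LinearMap.range_eq_top.2 hP)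
  | succ i ih =>
    calc (wongV E H (i + 1)).map P.mulVecLin
      _ = ((((wongV E H i).map E.mulVecLin).map Q.mulVecLin).comap Q.mulVecLin
            |>.comap H.mulVecLin).map P.mulVecLin := by
        rw [Submodule.comap_map_eq_of_injective hQ, wongV]
      _ = ((((wongV E H i).map P.mulVecLin).map E'.mulVecLin).comap H'.mulVecLin
            |>.comap P.mulVecLin).map P.mulVecLin := by
        simp only [← Submodule.map_comp, ← Submodule.comap_comp, ← mulVecLin_mul, hE, hH]
      _ = wongV E' H' (i + 1) := by
        rw [Submodule.map_comap_eq_of_surjective hP, ih, wongV]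

variable {q m p : ℕ} {A : Matrix (Fin q) (Fin q) ℝ} {B : Matrix (Fin q) (Fin m) ℝ}
  {C : Matrix (Fin p) (Fin q) ℝ} {D : Matrix (Fin p) (Fin m) ℝ}

theorem map_fst_admissiblePairs_sysV (i : ℕ) :
    (admissiblePairs A B C D (sysV A B C D i)).map (LinearMap.fst ℝ _ _) =
      sysV A B C D (i + 1) :=
  map_fst_comap_coprod _ _ _

theorem comap_inr_admissiblePairs_sysV (i : ℕ) :
    (admissiblePairs A B C D (sysV A B C D i)).comap (LinearMap.inr ℝ _ _) = sysU A B C D i := by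
  rw [admissiblePairs, ← Submodule.comap_comp, LinearMap.coprod_inr, sysU]

theorem map_funLeft_inl_wongV_fromBlocks (i : ℕ) :
    (wongV (fromBlocks 1 0 0 0) (fromBlocks A B C D) i).map
      (LinearMap.funLeft ℝ ℝ Sum.inl) = sysV A B C D i := by
  induction i with
  | zero =>
    exact (Submodule.map_top _).trans
      (LinearMap.range_eq_top.2 (LinearMap.funLeft_surjective_of_injective _ _ _ Sum.inl_injective))
  | succ i ih =>
    rw [wongV, comap_map_fromBlocks_eq_map_admissiblePairs, ih, ← Submodule.map_comp,
      ← map_fst_admissiblePairs_sysV]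
    rfl

theorem wongV_fromBlocks_succ (i : ℕ) :
    wongV (fromBlocks 1 0 0 0) (fromBlocks A B C D) (i + 1) =
      (admissiblePairs A B C D (sysV A B C D i)).map
        (LinearEquiv.sumArrowLequivProdArrow (Fin q) (Fin m) ℝ ℝ).symm.toLinearMap := by
  rw [wongV, comap_map_fromBlocks_eq_map_admissiblePairs, map_funLeft_inl_wongV_fromBlocks]

end WongSequence

/-- For each `i` there is `F_i ∈ ℝ^{m×q}` with
`(A+BF_i)𝒱_{i+1}(Λ) ⊆ 𝒱_i(Λ)`, `(C+DF_i)𝒱_{i+1}(Λ) = 0`, and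
`P𝒱_{i+1}(Δ) = {(v, F_i v + u) : v ∈ 𝒱_{i+1}(Λ), u ∈ 𝒰_i(Λ)}`. -/
theorem stmt17 {q m p : ℕ}
    (E H : Matrix (Fin q ⊕ Fin p) (Fin q ⊕ Fin m) ℝ) (hE : E.rank = q)
    (Q : Matrix (Fin q ⊕ Fin p) (Fin q ⊕ Fin p) ℝ)
    (P : Matrix (Fin q ⊕ Fin m) (Fin q ⊕ Fin m) ℝ)
    (hQ : IsUnit Q.det) (hP : IsUnit P.det)
    (A : Matrix (Fin q) (Fin q) ℝ) (B : Matrix (Fin q) (Fin m) ℝ)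
    (C : Matrix (Fin p) (Fin q) ℝ) (D : Matrix (Fin p) (Fin m) ℝ)
    (hexpE : Q * E * P⁻¹ = Matrix.fromBlocks 1 0 0 0)
    (hexpH : Q * H * P⁻¹ = Matrix.fromBlocks A B C D) :
    ∀ i : ℕ, ∃ F : Matrix (Fin m) (Fin q) ℝ,
      Submodule.map (A + B * F).mulVecLin (sysV A B C D (i + 1)) ≤ sysV A B C D i ∧
      Submodule.map (C + D * F).mulVecLin (sysV A B C D (i + 1)) = ⊥ ∧
      Submodule.map P.mulVecLin (wongV E H (i + 1)) =
        Submodule.map (Matrix.fromRows (1 : Matrix (Fin q) (Fin q) ℝ) F).mulVecLin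
          (sysV A B C D (i + 1)) ⊔
        Submodule.map (Matrix.fromRows (0 : Matrix (Fin q) (Fin m) ℝ)
          (1 : Matrix (Fin m) (Fin m) ℝ)).mulVecLin (sysU A B C D i) := by
  intro i
  obtain ⟨f, hf⟩ := exists_map_id_prod_map_fst_le (admissiblePairs A B C D (sysV A B C D i))
  obtain ⟨F, rfl⟩ : ∃ F : Matrix (Fin m) (Fin q) ℝ, F.mulVecLin = f :=
    ⟨LinearMap.toMatrix' f, toLin'_toMatrix' f⟩
  have hgraph := map_id_prod_sup_map_inr_eq hf
  rw [map_fst_admissiblePairs_sysV] at hf hgraph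
  rw [comap_inr_admissiblePairs_sysV] at hgraph
  obtain ⟨hstate, houtput⟩ := map_id_prod_le_admissiblePairs_iff.1 hf
  refine ⟨F, hstate, houtput, ?_⟩
  have hwong : (wongV E H (i + 1)).map P.mulVecLin =
      wongV (fromBlocks 1 0 0 0) (fromBlocks A B C D) (i + 1) :=
    map_mulVecLin_wongV
      (mulVec_injective_of_isUnit ((isUnit_iff_isUnit_det Q).2 hQ))
      (mulVec_surjective_iff_isUnit.2 ((isUnit_iff_isUnit_det P).2 hP))
      (by rw [← hexpE, nonsing_inv_mul_cancel_right _ _ hP])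
      (by rw [← hexpH, nonsing_inv_mul_cancel_right _ _ hP]) (i + 1)
  rw [hwong, wongV_fromBlocks_succ, ← hgraph, Submodule.map_sup, mulVecLin_fromRows,
    mulVecLin_fromRows, mulVecLin_one, mulVecLin_one, mulVecLin_zero,
    ← LinearMap.inr_eq_prod, Submodule.map_comp, Submodule.map_comp]
end
end
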